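/- For every integer t ≥ 4, the monomial w_2^{2^{t-1}+2^{t-2}}·w_4^{2^{t-2}-2} belongs to the ideal I_{2^t-2,4} of F_2[w_2,w_3,w_4]. -/

import Mathlib

open MvPolynomial

/-- The polynomials `g_r = g_r^{(4)}` in `F_2[w_2,w_3,w_4]` (variables `X 0 = w_2`,
`X 1 = w_3`, `X 2 = w_4`): `g_0 = 1`, `g_r = 0` for `r < 0`, and
`g_r = w_2·g_{r-2} + w_3·g_{r-3} + w_4·g_{r-4}` for `r ≥ 1`. -/
noncomputable def g4 : ℤ → MvPolynomial (Fin 3) (ZMod 2)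
  | r =>
    if r ≤ 0 then (if r = 0 then 1 else 0)
    else X 0 * g4 (r - 2) + X 1 * g4 (r - 3) + X 2 * g4 (r - 4)
  termination_by r => r.toNat
  decreasing_by all_goals omega

/-- The ideal `I_{n,4} = (g_{n-3}, g_{n-2}, g_{n-1}, g_n)` of `F_2[w_2,w_3,w_4]`. -/
noncomputable def I4 (n : ℤ) : Ideal (MvPolynomial (Fin 3) (ZMod 2)) :=
  Ideal.span {g4 (n - 3), g4 (n - 2), g4 (n - 1), g4 n}

/-!
Modulo 2 the generating function `G = ∑ g_r x^r` satisfies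
`G = (1 + w₂ x² + w₃ x³ + w₄ x⁴) G²`, so `g_{2m}` and `g_{2m+1}` are expressed through squares of
`g_m`, `g_{m-1}`, `g_{m-2}`. In particular `g_{2^j-3} = 0`, and the powers
`U_k = g_{2^{t-k}-2}^{2^k}`, `V_k = g_{2^{t-k}-4}^{2^k}` satisfy
`U_k = w₂^{2^k} U_{k+1} + w₃^{2^{k+1}} U_{k+2}` and `V_k = U_{k+1} + w₄^{2^k} V_{k+1}`.
In the quotient by `I_{2^t-2}` one has `U_0 = V_0 = w₃ V_1 = 0`, because `g_{2^t-5} = w₃ V_1`.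
The first recurrence yields `w₃^{2^k} U_k = 0` going up in `k`, then
`w₂^{2^{t-1}} w₃^{2^k} U_{k+1} = 0` going down, and finally that `w₂^{3·2^{t-2}}` annihilates `V_1`
and `U_k` for `k ≤ t - 2`. Telescoping the second one from `V_1` to `V_{t-2} = 1` gives the claim.
-/

section

variable {R : Type*} [CommRing R] {a b c x y : R} {U V : ℕ → R} {k n s : ℕ}

/-- The recurrence satisfied by the powers `U k = u (s + 2 - k) ^ 2 ^ k` of a sequence with
`u (j + 2) = a * u (j + 1) ^ 2 + b ^ 2 * u j ^ 4` in characteristic two. It is required only for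
`k ≤ s`, so that the initial values `U (s + 1)` and `U (s + 2)` are free. -/
def FrobeniusRecurrence (a b : R) (s : ℕ) (U : ℕ → R) : Prop :=
  ∀ k ≤ s, U k = a ^ 2 ^ k * U (k + 1) + b ^ 2 ^ (k + 1) * U (k + 2)

namespace FrobeniusRecurrence

theorem map {S : Type*} [CommRing S] (hU : FrobeniusRecurrence a b s U) (f : R →+* S) :
    FrobeniusRecurrence (f a) (f b) s (fun k => f (U k)) := fun k hk => by
  simp only [hU k hk, map_add, map_mul, map_pow]

theorem pow_two_pow_mul_eq_zero (hU : FrobeniusRecurrence a b s U) (hU0 : U 0 = 0)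
    (hbU1 : b * U 1 = 0) (hk : k ≤ s + 2) : b ^ 2 ^ k * U k = 0 := by
  induction k using Nat.twoStepInduction with
  | zero => rw [hU0, mul_zero]
  | one => exact pow_mul_eq_zero_of_le one_le_two (by rwa [pow_one])
  | more k ih₀ ih₁ =>
    have hUk := hU k (by lia)
    have hbUk : b ^ 2 ^ (k + 1) * U k = 0 :=
      pow_mul_eq_zero_of_le (Nat.pow_le_pow_right two_pos k.le_succ) (ih₀ (by lia))
    have hbUk1 : b ^ 2 ^ (k + 1) * U (k + 1) = 0 := ih₁ (by lia)
    rw [pow_succ 2 (k + 1), mul_two, pow_add]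
    linear_combination hbUk - a ^ 2 ^ k * hbUk1 - b ^ 2 ^ (k + 1) * hUk

theorem pow_two_pow_sub_two_pow_mul_eq_zero (hU : FrobeniusRecurrence a b s U) (hU0 : U 0 = 0)
    (hbU1 : b * U 1 = 0) (hUs : U (s + 2) = 0) (hk : k ≤ s + 1) :
    a ^ (2 ^ (s + 1) - 2 ^ k) * (b ^ 2 ^ k * U (k + 1)) = 0 := by
  induction hk using Nat.decreasingInduction with
  | self => rw [hUs, mul_zero, mul_zero]
  | of_succ k hk ih =>
    have hbUk : b ^ 2 ^ k * U k = 0 := hU.pow_two_pow_mul_eq_zero hU0 hbU1 (by lia)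
    have hsplit : 2 ^ (s + 1) - 2 ^ k = 2 ^ (s + 1) - 2 ^ (k + 1) + 2 ^ k := by
      have : 2 ^ (k + 1) ≤ 2 ^ (s + 1) := Nat.pow_le_pow_right two_pos hk
      lia
    rw [hsplit, pow_add]
    linear_combination a ^ (2 ^ (s + 1) - 2 ^ (k + 1)) * (hbUk - b ^ 2 ^ k * hU k (by lia))
      - b ^ 2 ^ k * ih

theorem mul_pow_two_pow_mul_eq_zero (hU : FrobeniusRecurrence a b s U) (hU0 : U 0 = 0)
    (hy : ∀ k ≤ s, y * (b ^ 2 ^ (k + 1) * U (k + 2)) = 0) (hk : k ≤ s + 1) :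
    y * (a ^ 2 ^ k * U k) = 0 := by
  induction k with
  | zero => rw [hU0, mul_zero, mul_zero]
  | succ k ih =>
    rw [pow_succ 2 k, mul_two, pow_add]
    linear_combination ih (by lia) - a ^ 2 ^ k * (y * hU k (by lia) + hy k (by lia))

theorem pow_three_mul_two_pow_mul_eq_zero (hU : FrobeniusRecurrence a b s U) (hU0 : U 0 = 0)
    (hbU1 : b * U 1 = 0) (hUs : U (s + 2) = 0) (hk : k ≤ s) : a ^ (3 * 2 ^ s) * U k = 0 := by
  have hy (i : ℕ) (hi : i ≤ s) : a ^ 2 ^ (s + 1) * (b ^ 2 ^ (i + 1) * U (i + 2)) = 0 :=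
    pow_mul_eq_zero_of_le (Nat.sub_le _ _)
      (hU.pow_two_pow_sub_two_pow_mul_eq_zero hU0 hbU1 hUs (by lia))
  have hexp : 2 ^ (s + 1) + 2 ^ k ≤ 3 * 2 ^ s := by
    have : 2 ^ k ≤ 2 ^ s := Nat.pow_le_pow_right two_pos hk
    lia
  apply pow_mul_eq_zero_of_le hexp
  rw [pow_add, mul_assoc]
  exact hU.mul_pow_two_pow_mul_eq_zero hU0 hy (by lia)

theorem pow_two_pow_succ_mul_eq_zero (hU : FrobeniusRecurrence a b s U) (hU0 : U 0 = 0)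
    (hUs : U (s + 1) = 1) (hby : b * y = 0) : a ^ 2 ^ (s + 1) * y = 0 := by
  have hy (k : ℕ) (_ : k ≤ s) : y * (b ^ 2 ^ (k + 1) * U (k + 2)) = 0 := by
    have hbpow : b ^ 2 ^ (k + 1) * y = 0 :=
      pow_mul_eq_zero_of_le Nat.one_le_two_pow (by rwa [pow_one])
    linear_combination U (k + 2) * hbpow
  have hyU := hU.mul_pow_two_pow_mul_eq_zero hU0 hy le_rfl
  rwa [hUs, mul_one, mul_comm] at hyU

end FrobeniusRecurrence

theorem mul_pow_two_pow_sub_two_mul_eq_zero (hV : ∀ k < n, V k = U (k + 1) + c ^ 2 ^ k * V (k + 1))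
    (hxU : ∀ k ≤ n, x * U k = 0) (hxV1 : x * V 1 = 0) (hk : 1 ≤ k) (hkn : k ≤ n) :
    x * (c ^ (2 ^ k - 2) * V k) = 0 := by
  induction k, hk using Nat.le_induction with
  | base => simpa using hxV1
  | succ k hk ih =>
    have hsplit : 2 ^ (k + 1) - 2 = 2 ^ k - 2 + 2 ^ k := by
      have : 2 ^ 1 ≤ 2 ^ k := Nat.pow_le_pow_right two_pos hk
      lia
    rw [hsplit, pow_add]
    linear_combination ih (by lia) - c ^ (2 ^ k - 2) * (x * hV k hkn + hxU (k + 1) hkn)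

theorem FrobeniusRecurrence.pow_mul_pow_eq_zero (hU : FrobeniusRecurrence a b s U) (hs : 1 ≤ s)
    (hV : ∀ k < s, V k = U (k + 1) + c ^ 2 ^ k * V (k + 1))
    (hU0 : U 0 = 0) (hV0 : V 0 = 0) (hbV1 : b * V 1 = 0)
    (hUs1 : U (s + 1) = 1) (hUs2 : U (s + 2) = 0) (hVs : V s = 1) :
    a ^ (3 * 2 ^ s) * c ^ (2 ^ s - 2) = 0 := by
  have hbU1 : b * U 1 = 0 := by
    have hV0_rec : V 0 = U 1 + c * V 1 := by simpa using hV 0 hs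
    linear_combination b * hV0 - b * hV0_rec - c * hbV1
  have haU (k : ℕ) (hk : k ≤ s) : a ^ (3 * 2 ^ s) * U k = 0 :=
    hU.pow_three_mul_two_pow_mul_eq_zero hU0 hbU1 hUs2 hk
  have haV1 : a ^ (3 * 2 ^ s) * V 1 = 0 :=
    pow_mul_eq_zero_of_le (by lia) (hU.pow_two_pow_succ_mul_eq_zero hU0 hUs1 hbV1)
  simpa [hVs] using mul_pow_two_pow_sub_two_mul_eq_zero hV haU haV1 hs le_rfl

end

theorem g4_of_pos {r : ℤ} (hr : 0 < r) :
    g4 r = X 0 * g4 (r - 2) + X 1 * g4 (r - 3) + X 2 * g4 (r - 4) := by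
  rw [g4, if_neg (by lia)]

theorem g4_of_neg {r : ℤ} (hr : r < 0) : g4 r = 0 := by
  rw [g4, if_pos (by lia), if_neg (by lia)]

theorem g4_zero : g4 0 = 1 := by
  rw [g4, if_pos le_rfl, if_pos rfl]

theorem g4_two_mul_and_g4_two_mul_add_one (m : ℤ) :
    g4 (2 * m) = g4 m ^ 2 + X 0 * g4 (m - 1) ^ 2 + X 2 * g4 (m - 2) ^ 2 ∧
      g4 (2 * m + 1) = X 1 * g4 (m - 1) ^ 2 := by
  rcases lt_trichotomy m 0 with hneg | rfl | hpos
  · simp [g4_of_neg (show 2 * m < 0 by lia), g4_of_neg (show 2 * m + 1 < 0 by lia),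
      g4_of_neg hneg, g4_of_neg (show m - 1 < 0 by lia), g4_of_neg (show m - 2 < 0 by lia)]
  · simp [g4_of_pos, g4_zero, g4_of_neg]
  · obtain ⟨even₁, odd₁⟩ := g4_two_mul_and_g4_two_mul_add_one (m - 1)
    obtain ⟨even₂, odd₂⟩ := g4_two_mul_and_g4_two_mul_add_one (m - 2)
    have two_eq_zero : (2 : MvPolynomial (Fin 3) (ZMod 2)) = 0 := CharTwo.two_eq_zero
    rw [show 2 * (m - 1) + 1 = 2 * m - 1 by ring, show m - 1 - 1 = m - 2 by ring] at odd₁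
    rw [show 2 * (m - 1) = 2 * m - 2 by ring, show m - 1 - 1 = m - 2 by ring,
      show m - 1 - 2 = m - 3 by ring] at even₁
    rw [show 2 * (m - 2) + 1 = 2 * m - 3 by ring, show m - 2 - 1 = m - 3 by ring] at odd₂
    rw [show 2 * (m - 2) = 2 * m - 4 by ring, show m - 2 - 1 = m - 3 by ring,
      show m - 2 - 2 = m - 4 by ring] at even₂
    constructor
    · rw [g4_of_pos (show 0 < 2 * m by lia), even₁, even₂, odd₂, g4_of_pos hpos,
        CharTwo.add_sq, CharTwo.add_sq]
      linear_combination X 0 * X 2 * g4 (m - 3) ^ 2 * two_eq_zero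
    · rw [g4_of_pos (show 0 < 2 * m + 1 by lia), show 2 * m + 1 - 2 = 2 * m - 1 by ring,
        show 2 * m + 1 - 3 = 2 * m - 2 by ring, show 2 * m + 1 - 4 = 2 * m - 3 by ring,
        odd₁, even₁, odd₂]
      linear_combination (X 0 * X 1 * g4 (m - 2) ^ 2 + X 1 * X 2 * g4 (m - 3) ^ 2) * two_eq_zero
termination_by m.toNat
decreasing_by all_goals lia

theorem g4_two_mul (m : ℤ) :
    g4 (2 * m) = g4 m ^ 2 + X 0 * g4 (m - 1) ^ 2 + X 2 * g4 (m - 2) ^ 2 :=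
  (g4_two_mul_and_g4_two_mul_add_one m).1

theorem g4_two_mul_add_one (m : ℤ) : g4 (2 * m + 1) = X 1 * g4 (m - 1) ^ 2 :=
  (g4_two_mul_and_g4_two_mul_add_one m).2

theorem g4_two_pow_sub_three (j : ℕ) : g4 (2 ^ j - 3) = 0 := by
  induction j with
  | zero => exact g4_of_neg (by norm_num)
  | succ j ih =>
    rw [show (2 : ℤ) ^ (j + 1) - 3 = 2 * (2 ^ j - 2) + 1 by ring, g4_two_mul_add_one,
      show (2 : ℤ) ^ j - 2 - 1 = 2 ^ j - 3 by ring, ih, zero_pow two_ne_zero, mul_zero]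

theorem g4_two_pow_succ_sub_one (j : ℕ) :
    g4 (2 ^ (j + 1) - 1) = X 1 * g4 (2 ^ j - 2) ^ 2 := by
  rw [show (2 : ℤ) ^ (j + 1) - 1 = 2 * (2 ^ j - 1) + 1 by ring, g4_two_mul_add_one,
    show (2 : ℤ) ^ j - 1 - 1 = 2 ^ j - 2 by ring]

theorem g4_two_pow_succ_sub_five (j : ℕ) :
    g4 (2 ^ (j + 1) - 5) = X 1 * g4 (2 ^ j - 4) ^ 2 := by
  rw [show (2 : ℤ) ^ (j + 1) - 5 = 2 * (2 ^ j - 3) + 1 by ring, g4_two_mul_add_one,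
    show (2 : ℤ) ^ j - 3 - 1 = 2 ^ j - 4 by ring]

theorem g4_two_pow_succ_sub_four (j : ℕ) :
    g4 (2 ^ (j + 1) - 4) = g4 (2 ^ j - 2) ^ 2 + X 2 * g4 (2 ^ j - 4) ^ 2 := by
  rw [show (2 : ℤ) ^ (j + 1) - 4 = 2 * (2 ^ j - 2) by ring, g4_two_mul,
    show (2 : ℤ) ^ j - 2 - 2 = 2 ^ j - 4 by ring,
    show (2 : ℤ) ^ j - 2 - 1 = 2 ^ j - 3 by ring, g4_two_pow_sub_three]
  ring

theorem g4_two_pow_add_two_sub_two (j : ℕ) :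
    g4 (2 ^ (j + 2) - 2) =
      X 0 * g4 (2 ^ (j + 1) - 2) ^ 2 + X 1 ^ 2 * g4 (2 ^ j - 2) ^ 4 := by
  rw [show (2 : ℤ) ^ (j + 2) - 2 = 2 * (2 ^ (j + 1) - 1) by ring, g4_two_mul,
    show (2 : ℤ) ^ (j + 1) - 1 - 2 = 2 ^ (j + 1) - 3 by ring, g4_two_pow_sub_three,
    show (2 : ℤ) ^ (j + 1) - 1 - 1 = 2 ^ (j + 1) - 2 by ring, g4_two_pow_succ_sub_one]
  ring

/-- The iterated Frobenius image `g_{2^{t-k}-d}^{2^k}`; for `d = 2` and `d = 4` these are the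
sequences `U` and `V` of the argument. Meant for `k ≤ t`, beyond which `t - k` is truncated. -/
noncomputable def g4FrobeniusPow (t : ℕ) (d : ℤ) (k : ℕ) : MvPolynomial (Fin 3) (ZMod 2) :=
  g4 (2 ^ (t - k) - d) ^ 2 ^ k

theorem frobeniusRecurrence_g4FrobeniusPow (s : ℕ) :
    FrobeniusRecurrence (X 0) (X 1) s (g4FrobeniusPow (s + 2) 2) := by
  intro k hk
  obtain ⟨j, rfl⟩ := Nat.exists_eq_add_of_le' hk
  simp only [g4FrobeniusPow, show j + k + 2 - k = j + 2 by lia,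
    show j + k + 2 - (k + 1) = j + 1 by lia, show j + k + 2 - (k + 2) = j by lia,
    g4_two_pow_add_two_sub_two, add_pow_char_pow]
  ring

theorem g4FrobeniusPow_four {t k : ℕ} (hk : k < t) :
    g4FrobeniusPow t 4 k =
      g4FrobeniusPow t 2 (k + 1) + X 2 ^ 2 ^ k * g4FrobeniusPow t 4 (k + 1) := by
  obtain ⟨j, rfl⟩ := Nat.exists_eq_add_of_lt hk
  simp only [g4FrobeniusPow, show k + j + 1 - k = j + 1 by lia,
    show k + j + 1 - (k + 1) = j by lia, g4_two_pow_succ_sub_four, add_pow_char_pow]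
  ring

theorem g4FrobeniusPow_zero (t : ℕ) (d : ℤ) : g4FrobeniusPow t d 0 = g4 (2 ^ t - d) := by
  simp [g4FrobeniusPow]

theorem g4FrobeniusPow_eq_one {t k : ℕ} {d : ℤ} (hd : 2 ^ (t - k) = d) :
    g4FrobeniusPow t d k = 1 := by
  rw [g4FrobeniusPow, hd, sub_self, g4_zero, one_pow]

theorem g4FrobeniusPow_eq_zero {t k : ℕ} {d : ℤ} (hd : 2 ^ (t - k) < d) :
    g4FrobeniusPow t d k = 0 := by
  rw [g4FrobeniusPow, g4_of_neg (sub_neg.mpr hd), zero_pow (by positivity)]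

theorem X_one_mul_g4FrobeniusPow_four_one (t : ℕ) :
    X 1 * g4FrobeniusPow (t + 1) 4 1 = g4 (2 ^ (t + 1) - 5) := by
  rw [g4FrobeniusPow, Nat.add_sub_cancel, pow_one, g4_two_pow_succ_sub_five]

theorem g4_sub_mem_I4 (n : ℤ) {i : ℤ} (hi₀ : 0 ≤ i) (hi₃ : i ≤ 3) : g4 (n - i) ∈ I4 n := by
  apply Ideal.subset_span
  interval_cases i <;> simp

/-- Lemma 5.3(c): for every `t ≥ 4`, `w_2^{2^{t-1}+2^{t-2}} w_4^{2^{t-2}-2} ∈ I_{2^t-2,4}`. -/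
theorem stmt17 (t : ℕ) (ht : 4 ≤ t) :
    (X 0 : MvPolynomial (Fin 3) (ZMod 2)) ^ (2 ^ (t - 1) + 2 ^ (t - 2))
        * X 2 ^ (2 ^ (t - 2) - 2)
      ∈ I4 (2 ^ t - 2) := by
  obtain ⟨s, rfl⟩ := Nat.exists_eq_add_of_le' (show 2 ≤ t by lia)
  have hexp : 2 ^ (s + 2 - 1) + 2 ^ (s + 2 - 2) = 3 * 2 ^ s := by
    rw [show s + 2 - 1 = s + 1 by lia, Nat.add_sub_cancel]
    ring
  rw [hexp, Nat.add_sub_cancel, ← Ideal.Quotient.eq_zero_iff_mem, map_mul, map_pow, map_pow]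
  set q := Ideal.Quotient.mk (I4 (2 ^ (s + 2) - 2))
  have hq {i : ℤ} (hi₂ : 2 ≤ i) (hi₅ : i ≤ 5) : q (g4 (2 ^ (s + 2) - i)) = 0 := by
    rw [Ideal.Quotient.eq_zero_iff_mem, ← sub_sub_sub_cancel_right _ i 2]
    exact g4_sub_mem_I4 _ (by lia) (by lia)
  refine ((frobeniusRecurrence_g4FrobeniusPow s).map q).pow_mul_pow_eq_zero
    (V := fun k => q (g4FrobeniusPow (s + 2) 4 k)) (by lia) (fun k hk => ?_) ?_ ?_ ?_ ?_ ?_ ?_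
  · simp only [g4FrobeniusPow_four (show k < s + 2 by lia), map_add, map_mul, map_pow]
  · rw [g4FrobeniusPow_zero, hq le_rfl (by lia)]
  · rw [g4FrobeniusPow_zero, hq (by lia) (by lia)]
  · rw [← map_mul, X_one_mul_g4FrobeniusPow_four_one, hq (by lia) le_rfl]
  · rw [g4FrobeniusPow_eq_one (by simp), map_one]
  · rw [g4FrobeniusPow_eq_zero (by simp), map_zero]
  · rw [g4FrobeniusPow_eq_one (by simp), map_one]
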